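/- Let M be a submanifold of a space form with second fundamental form α and nullity distribution 𝒩_p = {v ∈ T_pM : α(v, w) = 0 for all w ∈ T_pM}. On the open subset of M where the index of nullity dim 𝒩_p is locally constant, the distribution 𝒩 is smooth and autoparallel: if X and Y are vector fields tangent to 𝒩, then the Levi-Civita covariant derivative ∇_X Y is again tangent to 𝒩. Consequently, the maximal integral manifolds of 𝒩 on this open set are totally geodesic submanifolds of M. -/

import Mathlib

noncomputable section

open Set

/-- The three model space forms: Euclidean space, the round sphere, hyperbolic space. -/
inductive SpaceFormKind : Type
  | euclidean : SpaceFormKind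
  | sphere : SpaceFormKind
  | hyperbolic : SpaceFormKind

/-- The sign of the `i`-th coordinate in the ambient bilinear form: for the hyperbolic case the
ambient linear space is the Lorentz space `ℝ^{D-1,1}` whose last coordinate is timelike. -/
def formSign (k : SpaceFormKind) (D : ℕ) (i : Fin D) : ℝ :=
  match k with
  | .hyperbolic => if (i : ℕ) + 1 = D then -1 else 1
  | _ => 1

/-- The ambient bilinear form: the Euclidean inner product in the euclidean and spherical cases,
the Lorentz (Minkowski) form in the hyperbolic case. -/
def aForm (k : SpaceFormKind) {D : ℕ} (x y : EuclideanSpace ℝ (Fin D)) : ℝ :=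
  ∑ i, formSign k D i * x i * y i

/-- The space form, realized inside its ambient linear space: all of `ℝ^D`, the unit sphere,
or the hyperboloid model of hyperbolic space in Lorentz space. -/
def spaceForm (k : SpaceFormKind) (D : ℕ) : Set (EuclideanSpace ℝ (Fin D)) :=
  match k with
  | .euclidean => Set.univ
  | .sphere => {x | aForm .sphere x x = 1}
  | .hyperbolic => {x | aForm .hyperbolic x x = -1 ∧ ∀ i : Fin D, (i : ℕ) + 1 = D → 0 < x i}

/-- The normal space of the space form itself inside the ambient linear space at a point `p`:
trivial in the euclidean case, and spanned by the position vector in the other two cases. -/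
def radialAt (k : SpaceFormKind) {D : ℕ} (p : EuclideanSpace ℝ (Fin D)) :
    Submodule ℝ (EuclideanSpace ℝ (Fin D)) :=
  match k with
  | .euclidean => ⊥
  | _ => Submodule.span ℝ {p}

/-- The tangent space of a subset `S ⊆ ℝ^D` at `p`: the span of all velocities at `0` of smooth
curves inside `S` passing through `p` at time `0`. -/
def TangentAt {D : ℕ} (S : Set (EuclideanSpace ℝ (Fin D))) (p : EuclideanSpace ℝ (Fin D)) :
    Submodule ℝ (EuclideanSpace ℝ (Fin D)) :=
  Submodule.span ℝ {v | ∃ c : ℝ → EuclideanSpace ℝ (Fin D),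
    ContDiff ℝ (⊤ : ℕ∞) c ∧ (∀ t, c t ∈ S) ∧ c 0 = p ∧ deriv c 0 = v}

/-- `φ : U → ℝ^D` is a (smooth, embedded) local parametrization of `S` around `p`. -/
structure IsLocalParam {D : ℕ} (S : Set (EuclideanSpace ℝ (Fin D))) (n : ℕ)
    (φ : EuclideanSpace ℝ (Fin n) → EuclideanSpace ℝ (Fin D))
    (U : Set (EuclideanSpace ℝ (Fin n))) (p : EuclideanSpace ℝ (Fin D)) : Prop where
  isOpen : IsOpen U
  smooth : ContDiffOn ℝ (⊤ : ℕ∞) φ U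
  immersion : ∀ x ∈ U, Function.Injective (fderivWithin ℝ φ U x)
  injOn : Set.InjOn φ U
  openImage : ∃ V, IsOpen V ∧ φ '' U = S ∩ V
  mem : p ∈ φ '' U
  embedding : ∃ ψ, ContinuousOn ψ (φ '' U) ∧ ∀ x ∈ U, ψ (φ x) = x

/-- `S ⊆ ℝ^D` is an `n`-dimensional smooth embedded submanifold. -/
def IsSubmanifold {D : ℕ} (S : Set (EuclideanSpace ℝ (Fin D))) (n : ℕ) : Prop :=
  ∀ p ∈ S, ∃ φ U, IsLocalParam S n φ U p

/-- The nullity space at `p` of the second fundamental form `α` of `S`, viewed as a submanifold of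
the space form of kind `k`:  a tangent vector `v` is in the nullity iff `α(v, w) = 0` for all
`w ∈ T_pS`; concretely, iff for every smooth tangent vector field `W` along a smooth curve `c` in
`S` with `c(0) = p`, `c'(0) = v`, the derivative `W'(0)` has no component normal to `S` inside the
space form, i.e. `W'(0)` lies in the sum of `T_pS` and the normal space of the space form itself. -/
def nullityAt (k : SpaceFormKind) {D : ℕ} (S : Set (EuclideanSpace ℝ (Fin D)))
    (p : EuclideanSpace ℝ (Fin D)) : Set (EuclideanSpace ℝ (Fin D)) :=
  {v | v ∈ TangentAt S p ∧ ∀ c W : ℝ → EuclideanSpace ℝ (Fin D),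
    ContDiff ℝ (⊤ : ℕ∞) c → (∀ t, c t ∈ S) → c 0 = p → deriv c 0 = v →
    ContDiff ℝ (⊤ : ℕ∞) W → (∀ t, W t ∈ TangentAt S (c t)) →
    deriv W 0 ∈ TangentAt S p ⊔ radialAt k p}

/-- The index of nullity of `S` at `p`. -/
def nullityIndex (k : SpaceFormKind) {D : ℕ} (S : Set (EuclideanSpace ℝ (Fin D)))
    (p : EuclideanSpace ℝ (Fin D)) : ℕ :=
  Set.finrank ℝ (nullityAt k S p)

/-- `γ : ℝ → ℝ^D` is a geodesic of the Riemannian (resp. Lorentzian-induced) submanifold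
`S` of the space form of kind `k`: a smooth curve in `S` whose acceleration is orthogonal,
with respect to the ambient bilinear form, to all tangent spaces of `S`. -/
structure IsGeodesicOn (k : SpaceFormKind) {D : ℕ} (S : Set (EuclideanSpace ℝ (Fin D)))
    (γ : ℝ → EuclideanSpace ℝ (Fin D)) : Prop where
  smooth : ContDiff ℝ (⊤ : ℕ∞) γ
  mem : ∀ t, γ t ∈ S
  accel_normal : ∀ t, ∀ v ∈ TangentAt S (γ t), aForm k (deriv (deriv γ) t) v = 0

/-- `S` is a (geodesically, equivalently metrically) complete Riemannian manifold: every
initial condition gives rise to a geodesic defined on all of `ℝ`. -/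
def GeodComplete (k : SpaceFormKind) {D : ℕ} (S : Set (EuclideanSpace ℝ (Fin D))) : Prop :=
  ∀ p ∈ S, ∀ v ∈ TangentAt S p, ∃ γ, IsGeodesicOn k S γ ∧ γ 0 = p ∧ deriv γ 0 = v

/-- The set of points of `S` where the index of nullity is minimal. -/
def minNullitySet (k : SpaceFormKind) {D : ℕ} (S : Set (EuclideanSpace ℝ (Fin D))) :
    Set (EuclideanSpace ℝ (Fin D)) :=
  {q | q ∈ S ∧ ∀ r ∈ S, nullityIndex k S q ≤ nullityIndex k S r}

/-- The maximal integral manifold (leaf) through `p` of the nullity distribution of `S`,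
restricted to the subset `A`: all points reachable from `p` by smooth curves inside `A`
everywhere tangent to the nullity distribution. -/
def leafThrough (k : SpaceFormKind) {D : ℕ} (S A : Set (EuclideanSpace ℝ (Fin D)))
    (p : EuclideanSpace ℝ (Fin D)) : Set (EuclideanSpace ℝ (Fin D)) :=
  {q | ∃ c : ℝ → EuclideanSpace ℝ (Fin D), ContDiff ℝ (⊤ : ℕ∞) c ∧ (∀ t, c t ∈ A) ∧
    (∀ t, deriv c t ∈ nullityAt k S (c t)) ∧ c 0 = p ∧ c 1 = q}

/-- The dimension of the ambient linear space: `n + k` for a submanifold `M^n ⊆ ℝ^{n+k}`,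
`n + k + 1` for `M^n ⊆ S^{n+k} ⊆ ℝ^{n+k+1}` and for `M^n ⊆ H^{n+k} ⊆ ℝ^{n+k,1}`. -/
def ambientDim (k : SpaceFormKind) (n codim : ℕ) : ℕ :=
  match k with
  | .euclidean => n + codim
  | _ => n + codim + 1

/-- The set of points of `S` where the index of nullity is locally constant. -/
def lcNullitySet (k : SpaceFormKind) {D : ℕ} (S : Set (EuclideanSpace ℝ (Fin D))) :
    Set (EuclideanSpace ℝ (Fin D)) :=
  {q | q ∈ S ∧ ∃ V ∈ nhds q, ∀ r ∈ V ∩ S, nullityIndex k S r = nullityIndex k S q}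

/-- The orthogonal complement of a subspace `K` with respect to the ambient bilinear form. -/
def aPerp (k : SpaceFormKind) {D : ℕ} (K : Submodule ℝ (EuclideanSpace ℝ (Fin D))) :
    Submodule ℝ (EuclideanSpace ℝ (Fin D)) where
  carrier := {u | ∀ w ∈ K, aForm k u w = 0}
  zero_mem' := by intro w _; simp [aForm]
  add_mem' := by
    intro x y hx hy w hw
    have hxy : ∀ i, formSign k D i * (x + y) i * w i
        = formSign k D i * x i * w i + formSign k D i * y i * w i := by
      intro i; simp [PiLp.add_apply]; ring
    simp only [aForm] at *
    rw [Finset.sum_congr rfl (fun i _ => hxy i), Finset.sum_add_distrib, hx w hw, hy w hw,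
      add_zero]
  smul_mem' := by
    intro c x hx w hw
    have hcx : ∀ i, formSign k D i * (c • x) i * w i = c * (formSign k D i * x i * w i) := by
      intro i; simp [PiLp.smul_apply, smul_eq_mul]; ring
    simp only [aForm] at *
    rw [Finset.sum_congr rfl (fun i _ => hcx i), ← Finset.mul_sum, hx w hw, mul_zero]

/-! Near each of its points `S` is the fixed-point set of a smooth retraction `r` of an open set `V`
into `S`. At `q ∈ S ∩ V` the first derivative of `r` is a projection to the tangent space, and on
tangent vectors the second derivative is, modulo tangent and radial directions, the second
fundamental form. The nullity space is thus the kernel of a linear map depending smoothly on `q`,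
and near a point where its dimension is locally constant such a kernel is the range of a smooth
family of projections `P`. This gives smooth frames.

If `Y` takes values in the nullity spaces, then its derivatives in tangent directions have no normal
component. Differentiating this once more, the symmetry of the second derivatives of `Y` and of `r`
yields the Codazzi equation `α(v, ∇_w Y) = α(w, ∇_v Y)`; its left-hand side vanishes when `v` lies
in the nullity space, so `∇_v Y` lies there as well.

For a geodesic `γ` set `b = M(γ) γ'`, where `M` projects orthogonally to the tangent space and then
along the nullity space. Since `γ''` is normal and the nullity distribution is autoparallel, `b`
solves a homogeneous linear differential equation, and hence vanishes if it vanishes initially. So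
`γ` stays tangent to the nullity distribution.
-/

open scoped ContDiff Topology

section Calculus

variable {𝕜 : Type*} [NontriviallyNormedField 𝕜]

theorem contDiffAt_ringInverse_comp {X R : Type*} [NormedAddCommGroup X] [NormedSpace 𝕜 X]
    [NormedRing R] [NormedAlgebra 𝕜 R] [HasSummableGeomSeries R] {n : WithTop ℕ∞} {G : X → R}
    {x : X} (hG : ContDiffAt 𝕜 n G x) (hx : IsUnit (G x)) :
    ContDiffAt 𝕜 n (fun y => Ring.inverse (G y)) x := by
  obtain ⟨u, hu⟩ := hx
  exact ContDiffAt.comp x (hu ▸ contDiffAt_ringInverse 𝕜 u) hG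

theorem exists_openPartialHomeomorph_contDiffOn_symm {𝕜 E F : Type*} [RCLike 𝕜]
    [NormedAddCommGroup E] [NormedSpace 𝕜 E] [CompleteSpace E] [NormedAddCommGroup F]
    [NormedSpace 𝕜 F] {n : WithTop ℕ∞} (hn : n ≠ 0) {f : E → F} {U : Set E} (hU : IsOpen U)
    (hf : ContDiffOn 𝕜 n f U) {x : E} (hx : x ∈ U) {f' : E ≃L[𝕜] F}
    (hf' : HasFDerivAt f (f' : E →L[𝕜] F) x) :
    ∃ e : OpenPartialHomeomorph E F,
      x ∈ e.source ∧ e.source ⊆ U ∧ ⇑e = f ∧ ContDiffOn 𝕜 n e.symm e.target := by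
  have hfU : ∀ y ∈ U, ContDiffAt 𝕜 n f y := fun y hy => hf.contDiffAt (hU.mem_nhds hy)
  set U' := U ∩ fderiv 𝕜 f ⁻¹' range ((↑) : (E ≃L[𝕜] F) → E →L[𝕜] F)
  have hU' : IsOpen U' :=
    (hf.continuousOn_fderiv_of_isOpen hU
      (ENat.one_le_iff_ne_zero_withTop.2 hn)).isOpen_inter_preimage hU ContinuousLinearEquiv.isOpen
  let h := (hfU x hx).toOpenPartialHomeomorph f hf' hn
  have hsource : (h.restrOpen U' hU').source ⊆ U' := inter_subset_right
  refine ⟨h.restrOpen U' hU', ⟨?_, hx, f', hf'.fderiv.symm⟩, fun y hy => (hsource hy).1, rfl,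
    fun z hz => ?_⟩
  · exact (hfU x hx).mem_toOpenPartialHomeomorph_source hf' hn
  · obtain ⟨hzU, e', he'⟩ := hsource ((h.restrOpen U' hU').map_target hz)
    refine ((h.restrOpen U' hU').contDiffAt_symm (f₀' := e') hz ?_ (hfU _ hzU)).contDiffWithinAt
    rw [he']
    exact ((hfU _ hzU).differentiableAt hn).hasFDerivAt

theorem exists_contDiff_eventuallyEq {E F : Type*} [NormedAddCommGroup E] [NormedSpace ℝ E]
    [HasContDiffBump E] [NormedAddCommGroup F] [NormedSpace ℝ F] {n : ℕ∞} {f : E → F} {V : Set E}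
    {p : E} (hf : ContDiffOn ℝ n f V) (hV : V ∈ 𝓝 p) :
    ∃ g : E → F, ContDiff ℝ n g ∧ g =ᶠ[𝓝 p] f := by
  obtain ⟨δ, hδ, hball⟩ := Metric.mem_nhds_iff.1 hV
  let χ : ContDiffBump p := ⟨δ / 4, δ / 2, by positivity, by linarith⟩
  have hχ : tsupport χ ⊆ Metric.ball p δ := by
    rw [χ.tsupport_eq]
    exact Metric.closedBall_subset_ball (half_lt_self hδ)
  refine ⟨fun y => χ y • f y, contMDiff_iff_contDiff.1 (contMDiff_of_tsupport fun y hy => ?_), ?_⟩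
  · have hyV := Metric.isOpen_ball.mem_nhds (hχ (tsupport_smul_subset_left _ _ hy))
    have hfy := hf.contDiffAt (Filter.mem_of_superset hyV hball)
    exact (χ.contDiff.contDiffAt.smul hfy).contMDiffAt
  · filter_upwards [χ.eventuallyEq_one] with y hy
    simp [hy]

end Calculus

section KernelFamily

variable {𝕜 E F : Type*} [NontriviallyNormedField 𝕜] [NormedAddCommGroup E]
  [NormedSpace 𝕜 E] [NormedAddCommGroup F] [NormedSpace 𝕜 F]

theorem exists_clm_comp_comp_eq_self [CompleteSpace 𝕜] [FiniteDimensional 𝕜 F] (A : E →L[𝕜] F) :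
    ∃ M : F →L[𝕜] E, ∀ u, A (M (A u)) = A u := by
  obtain ⟨s, hs⟩ := LinearMap.exists_rightInverse_of_surjective
    (A : E →ₗ[𝕜] F).rangeRestrict (LinearMap.range_rangeRestrict _)
  obtain ⟨M, hM⟩ := LinearMap.exists_extend s
  refine ⟨M.toContinuousLinearMap, fun u => ?_⟩
  let Au := (A : E →ₗ[𝕜] F).rangeRestrict u
  have hMu : M (A u) = s Au := LinearMap.congr_fun hM Au
  have hsu : A (s Au) = A u := congrArg Subtype.val (LinearMap.congr_fun hs Au)
  simpa [hMu] using hsu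

-- On `B.ker` the operator `M ∘ B + (1 - M ∘ A)` agrees with `1 - M ∘ A`, so it maps `B.ker` into
-- `A.ker`, and onto it by dimension.
theorem isProj_ker_inverse_comp [FiniteDimensional 𝕜 E] {A B : E →L[𝕜] F} {M : F →L[𝕜] E}
    (hM : ∀ u, A (M (A u)) = A u) (hG : IsUnit (M ∘L B + (1 - M ∘L A)))
    (hAB : Module.finrank 𝕜 B.ker = Module.finrank 𝕜 A.ker) :
    let P := Ring.inverse (M ∘L B + (1 - M ∘L A)) ∘L (1 - M ∘L A)
    LinearMap.IsProj B.ker P ∧ A.ker.map (P : E →ₗ[𝕜] E) = B.ker := by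
  set G := M ∘L B + (1 - M ∘L A) with hGdef
  have hleft (u : E) : Ring.inverse G (G u) = u :=
    DFunLike.congr_fun (Ring.inverse_mul_cancel _ hG) u
  have hGB : ∀ u ∈ B.ker, G u = u - M (A u) := fun u hu => by
    simp [hGdef, show B u = 0 from hu]
  have hmap : B.ker.map (G : E →ₗ[𝕜] E) = A.ker := by
    refine Submodule.eq_of_le_of_finrank_eq ?_ ?_
    · rintro _ ⟨u, hu, rfl⟩
      simp [hGB u hu, hM]
    · rw [← hAB]
      exact (Submodule.equivMapOfInjective (G : E →ₗ[𝕜] E)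
        (Function.LeftInverse.injective hleft) _).finrank_eq.symm
  have hGinv : ∀ w ∈ A.ker, Ring.inverse G w ∈ B.ker := by
    rw [← hmap]
    rintro _ ⟨u, hu, rfl⟩
    simpa [hleft] using hu
  have hPB : ∀ u ∈ B.ker, Ring.inverse G (u - M (A u)) = u := fun u hu => by
    rw [← hGB u hu, hleft]
  have hPA (u : E) : Ring.inverse G (u - M (A u)) ∈ B.ker := hGinv _ (by simp [hM])
  refine ⟨⟨hPA, hPB⟩, le_antisymm ?_ fun u hu => ?_⟩
  · rintro _ ⟨u, -, rfl⟩
    exact hPA u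
  · have hGu : G u ∈ A.ker := hmap ▸ Submodule.mem_map_of_mem hu
    exact ⟨G u, hGu, by simpa [show A (G u) = 0 from hGu] using hleft u⟩

theorem exists_contDiffOn_isProj_ker [CompleteSpace 𝕜] {X : Type*}
    [NormedAddCommGroup X] [NormedSpace 𝕜 X] [FiniteDimensional 𝕜 E]
    [FiniteDimensional 𝕜 F] {n : WithTop ℕ∞} {L : X → E →L[𝕜] F} {V : Set X} (hV : IsOpen V)
    (hL : ContDiffOn 𝕜 n L V) {p : X} (hp : p ∈ V) :
    ∃ V' ⊆ V, IsOpen V' ∧ p ∈ V' ∧ ∃ P : X → E →L[𝕜] E, ContDiffOn 𝕜 n P V' ∧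
      ∀ q ∈ V', Module.finrank 𝕜 (L q).ker = Module.finrank 𝕜 (L p).ker →
        LinearMap.IsProj (L q).ker (P q) ∧
          (L p).ker.map (P q : E →ₗ[𝕜] E) = (L q).ker := by
  have : CompleteSpace E := FiniteDimensional.complete 𝕜 E
  obtain ⟨M, hM⟩ := exists_clm_comp_comp_eq_self (L p)
  let G : X → E →L[𝕜] E := fun q => M ∘L L q + (1 - M ∘L L p)
  have hG : ContDiffOn 𝕜 n G V := (contDiffOn_const.clm_comp hL).add contDiffOn_const
  let V' := V ∩ G ⁻¹' {A | IsUnit A}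
  have hV' : IsOpen V' := hG.continuousOn.isOpen_inter_preimage hV Units.isOpen
  refine ⟨V', inter_subset_left, hV', ⟨hp, by simp [G]⟩,
    fun q => Ring.inverse (G q) ∘L (1 - M ∘L L p), fun q hq => ?_,
    fun q hq hrank => isProj_ker_inverse_comp hM hq.2 hrank⟩
  have hGq := contDiffAt_ringInverse_comp (hG.contDiffAt (hV.mem_nhds hq.1)) hq.2
  exact (hGq.clm_comp contDiffAt_const).contDiffWithinAt

end KernelFamily

section FormProjection

variable {E : Type*} [NormedAddCommGroup E] [InnerProductSpace ℝ E]

open ContinuousLinearMap (adjoint)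

/-- For the bilinear form `⟪J ·, ·⟫` and an idempotent `π`, the Gram operator of this form on the
range of `π`, completed by the inner product on the kernel of `π` so as to be invertible. -/
def gramOp [CompleteSpace E] (J π : E →L[ℝ] E) : E →L[ℝ] E :=
  adjoint π ∘L J ∘L π + adjoint (1 - π) ∘L (1 - π)

/-- The orthogonal projection to the range of the idempotent `π` for the bilinear form `⟪J ·, ·⟫`,
provided that this form has no isotropic vectors there. -/
def formProj [CompleteSpace E] (J π : E →L[ℝ] E) : E →L[ℝ] E :=
  Ring.inverse (gramOp J π) ∘L adjoint π ∘L J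

theorem isUnit_gramOp [FiniteDimensional ℝ E] {J π : E →L[ℝ] E} (hπ : ∀ u, π (π u) = π u)
    (hJ : ∀ u, inner ℝ (J (π u)) (π u) = 0 → π u = 0) : IsUnit (gramOp J π) := by
  have hinner (u w : E) : inner ℝ (gramOp J π u) w =
      inner ℝ (J (π u)) (π w) + inner ℝ (u - π u) (w - π w) := by
    simp only [gramOp, add_apply, ContinuousLinearMap.comp_apply, inner_add_left,
      ContinuousLinearMap.adjoint_inner_left, sub_apply, one_apply_eq_self]
  have hinj : Function.Injective (gramOp J π) := by
    refine (injective_iff_map_eq_zero _).2 fun u hu => ?_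
    have hπu : π u = 0 := hJ u (by simpa [hu, hπ] using (hinner u (π u)).symm)
    simpa [hu, hπu] using (hinner u u).symm
  exact ContinuousLinearMap.isUnit_iff_bijective.2 ⟨hinj,
    (LinearMap.injective_iff_surjective (f := (gramOp J π : E →ₗ[ℝ] E))).1 hinj⟩

theorem formProj_apply_of_apply_eq [CompleteSpace E] {J π : E →L[ℝ] E} {u : E}
    (hG : IsUnit (gramOp J π)) (hu : π u = u) : formProj J π u = u := by
  have hGu : gramOp J π u = adjoint π (J u) := by simp [gramOp, hu]
  change Ring.inverse (gramOp J π) (adjoint π (J u)) = u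
  rw [← hGu]
  exact DFunLike.congr_fun (Ring.inverse_mul_cancel _ hG) u

theorem formProj_apply_eq_zero [CompleteSpace E] {J π : E →L[ℝ] E} {u : E}
    (hu : ∀ w, inner ℝ (J u) (π w) = 0) : formProj J π u = 0 := by
  have hadj : adjoint π (J u) = 0 := ext_inner_right ℝ fun w => by
    rw [ContinuousLinearMap.adjoint_inner_left, hu, inner_zero_left]
  simp [formProj, hadj]

theorem contDiffAt_formProj [CompleteSpace E] {X : Type*} [NormedAddCommGroup X]
    [NormedSpace ℝ X] {n : WithTop ℕ∞} {J : E →L[ℝ] E} {π : X → E →L[ℝ] E} {x : X}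
    (hπ : ContDiffAt ℝ n π x) (hG : IsUnit (gramOp J (π x))) :
    ContDiffAt ℝ n (fun y => formProj J (π y)) x := by
  have hadj {f : X → E →L[ℝ] E} (hf : ContDiffAt ℝ n f x) :
      ContDiffAt ℝ n (fun y => adjoint (f y)) x :=
    (starL' ℝ : (E →L[ℝ] E) ≃L[ℝ] (E →L[ℝ] E)).contDiff.comp_contDiffAt x hf
  have hcompl := contDiffAt_const (c := (1 : E →L[ℝ] E)).sub hπ
  have hgram : ContDiffAt ℝ n (fun y => gramOp J (π y)) x :=
    ((hadj hπ).clm_comp (contDiffAt_const.clm_comp hπ)).add ((hadj hcompl).clm_comp hcompl)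
  exact (contDiffAt_ringInverse_comp hgram hG).clm_comp ((hadj hπ).clm_comp contDiffAt_const)

end FormProjection

section Curves

open Filter

variable {E : Type*} [NormedAddCommGroup E] [NormedSpace ℝ E]

theorem eventually_eq_zero_of_hasDerivAt_clm_apply {A : ℝ → E →L[ℝ] E} {b : ℝ → E} {t₀ : ℝ}
    (hA : ContinuousAt A t₀) (hb : ∀ᶠ t in 𝓝 t₀, HasDerivAt b (A t (b t)) t) (h0 : b t₀ = 0) :
    ∀ᶠ t in 𝓝 t₀, b t = 0 := by
  have hlip : ∀ᶠ t in 𝓝 t₀, LipschitzOnWith (‖A t₀‖₊ + 1) (A t) univ :=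
    (hA.nnnorm.eventually_le_const (lt_add_one _)).mono fun t ht =>
      ((A t).lipschitz.weaken ht).lipschitzOnWith
  exact ODE_solution_unique_of_eventually (g := fun _ => 0) hlip
    (hb.mono fun t ht => ⟨ht, mem_univ _⟩)
    (.of_forall fun t => ⟨by simpa using hasDerivAt_const t (0 : E), mem_univ _⟩) h0

-- With `b = M(γ) γ'` and `N` the derivative of `M`, one has
-- `N γ' γ' = N b γ' + N (γ' - b) b + N (γ' - b) (γ' - b)`, so `b` solves a linear equation.
theorem eventually_clm_apply_deriv_eq_zero {M : E → E →L[ℝ] E} {γ : ℝ → E} {t₀ : ℝ}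
    (hM : ContDiffAt ℝ 1 M (γ t₀)) (hγ : ContDiff ℝ 2 γ)
    (hacc : ∀ᶠ t in 𝓝 t₀, M (γ t) (deriv (deriv γ) t) = 0)
    (hquad : ∀ᶠ t in 𝓝 t₀, fderiv ℝ M (γ t) (deriv γ t - M (γ t) (deriv γ t))
      (deriv γ t - M (γ t) (deriv γ t)) = 0)
    (h0 : M (γ t₀) (deriv γ t₀) = 0) : ∀ᶠ t in 𝓝 t₀, M (γ t) (deriv γ t) = 0 := by
  let b : ℝ → E := fun t => M (γ t) (deriv γ t)
  let A : ℝ → E →L[ℝ] E := fun t =>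
    (fderiv ℝ M (γ t)).flip (deriv γ t) + fderiv ℝ M (γ t) (deriv γ t - b t)
  have hγ' : ContDiff ℝ 1 (deriv γ) := hγ.deriv'
  have hMd : ∀ᶠ t in 𝓝 t₀, DifferentiableAt ℝ M (γ t) :=
    hγ.continuous.continuousAt.eventually
      ((hM.eventually (by simp)).mono fun y hy => hy.differentiableAt one_ne_zero)
  have hbA : ∀ᶠ t in 𝓝 t₀, HasDerivAt b (A t (b t)) t := by
    filter_upwards [hMd, hacc, hquad] with t hMt hat hqt
    have hγt := (hγ.differentiable two_ne_zero t).hasDerivAt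
    convert! (hMt.hasFDerivAt.comp_hasDerivAt t hγt).clm_apply
      (hγ'.differentiable one_ne_zero t).hasDerivAt using 1
    rw [Function.comp_apply, hat, add_zero]
    have hsplit (N : E →L[ℝ] E →L[ℝ] E) (x y : E) :
        N x x = N y x + N (x - y) y + N (x - y) (x - y) := by
      simp only [map_sub, sub_apply]; abel
    rw [hsplit _ _ (b t), hqt, add_zero]
    rfl
  refine eventually_eq_zero_of_hasDerivAt_clm_apply (A := A) ?_ hbA h0
  have hdM : ContinuousAt (fun t => fderiv ℝ M (γ t)) t₀ :=
    (hM.continuousAt_fderiv one_ne_zero).comp hγ.continuous.continuousAt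
  have hdγ := hγ'.continuous.continuousAt (x := t₀)
  exact (((ContinuousLinearMap.flipₗᵢ ℝ E E E).continuous.continuousAt.comp hdM).clm_apply hdγ).add
    (hdM.clm_apply (hdγ.sub hbA.self_of_nhds.continuousAt))

theorem deriv_smoothTransition_of_nonpos {x : ℝ} (hx : x ≤ 0) :
    deriv Real.smoothTransition x = 0 :=
  IsLocalMin.deriv_eq_zero <| .of_forall fun y => by
    rw [Real.smoothTransition.zero_of_nonpos hx]
    exact Real.smoothTransition.nonneg y

theorem deriv_smoothTransition_of_one_le {x : ℝ} (hx : 1 ≤ x) :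
    deriv Real.smoothTransition x = 0 :=
  IsLocalMax.deriv_eq_zero <| .of_forall fun y => by
    rw [Real.smoothTransition.one_of_one_le hx]
    exact Real.smoothTransition.le_one y

-- Reparametrizing by smooth transitions makes both curves stand still where they are joined.
theorem exists_contDiff_concat {n : ℕ∞} (hn : n ≠ 0) {T : Set (E × E)}
    (hT : ∀ z ∈ T, ∀ a : ℝ, (z.1, a • z.2) ∈ T) {c₁ c₂ : ℝ → E} (hc₁ : ContDiff ℝ n c₁)
    (hc₂ : ContDiff ℝ n c₂) (hc : c₁ 1 = c₂ 0) (hT₁ : ∀ s, (c₁ s, deriv c₁ s) ∈ T)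
    (hT₂ : ∀ s ∈ Icc (0 : ℝ) 1, (c₂ s, deriv c₂ s) ∈ T) :
    ∃ c : ℝ → E, ContDiff ℝ n c ∧ c 0 = c₁ 0 ∧ c 1 = c₂ 1 ∧ ∀ s, (c s, deriv c s) ∈ T := by
  let φ (m s : ℝ) : ℝ := Real.smoothTransition (2 * s - m)
  have hφ (m : ℝ) : ContDiff ℝ n (φ m) :=
    Real.smoothTransition.contDiff.comp ((contDiff_const.mul contDiff_id).sub contDiff_const)
  have hφ' (m s : ℝ) : HasDerivAt (φ m) (deriv Real.smoothTransition (2 * s - m) * 2) s := by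
    have hσ : Differentiable ℝ Real.smoothTransition :=
      Real.smoothTransition.contDiff.differentiable one_ne_zero
    have hlin : HasDerivAt (fun s => 2 * s - m) 2 s := by
      simpa using ((hasDerivAt_id s).const_mul 2).sub_const m
    exact (hσ (2 * s - m)).hasDerivAt.comp s hlin
  have hn' : (n : WithTop ℕ∞) ≠ 0 := by exact_mod_cast hn
  let c : ℝ → E := fun s => c₁ (φ 0 s) + (c₂ (φ 1 s) - c₂ 0)
  have hcd (s : ℝ) : HasDerivAt c ((deriv Real.smoothTransition (2 * s - 0) * 2) •
      deriv c₁ (φ 0 s) + (deriv Real.smoothTransition (2 * s - 1) * 2) • deriv c₂ (φ 1 s)) s :=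
    ((hc₁.differentiable hn' _).hasDerivAt.scomp s (hφ' 0 s)).add
      (((hc₂.differentiable hn' _).hasDerivAt.scomp s (hφ' 1 s)).sub_const _)
  refine ⟨c, (hc₁.comp (hφ 0)).add ((hc₂.comp (hφ 1)).sub contDiff_const),
    by simp [c, φ, Real.smoothTransition.zero_of_nonpos],
    by norm_num [c, φ, hc, Real.smoothTransition.one_of_one_le], fun s => ?_⟩
  rw [(hcd s).deriv]
  rcases le_total s (1 / 2) with hs | hs
  · have hle : 2 * s - 1 ≤ 0 := by linarith
    have hcs : c s = c₁ (φ 0 s) := by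
      simp [c, show φ 1 s = 0 from Real.smoothTransition.zero_of_nonpos hle]
    simpa [hcs, deriv_smoothTransition_of_nonpos hle] using hT _ (hT₁ (φ 0 s)) _
  · have hle : 1 ≤ 2 * s - 0 := by linarith
    have hcs : c s = c₂ (φ 1 s) := by
      simp [c, hc, show φ 0 s = 1 from Real.smoothTransition.one_of_one_le hle]
    simpa only [hcs, deriv_smoothTransition_of_one_le hle, zero_mul, zero_smul, zero_add] using
      hT _ (hT₂ (φ 1 s)
        ⟨Real.smoothTransition.nonneg _, Real.smoothTransition.le_one _⟩) _

end Curves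

/-- `r` is a smooth retraction of the open set `V` to `S` near `S ∩ V`: it maps `V` into `S` and
fixes the points of `S ∩ V`, but may move points of `V` to points of `S` outside `V`. Its first and
second derivatives at points of `S ∩ V` carry the tangent spaces and the second fundamental form
of `S`. -/
structure IsLocalRetraction {E : Type*} [NormedAddCommGroup E] [NormedSpace ℝ E] (S V : Set E)
    (r : E → E) : Prop where
  isOpen : IsOpen V
  contDiffOn : ContDiffOn ℝ ∞ r V
  mapsTo : MapsTo r V S
  eqOn_id : EqOn r id (S ∩ V)

theorem exists_contDiff_curve_mem {E : Type*} [NormedAddCommGroup E] [NormedSpace ℝ E] {U : Set E}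
    (hU : IsOpen U) {q : E} (hq : q ∈ U) (w : E) :
    ∃ c : ℝ → E, ContDiff ℝ ∞ c ∧ (∀ t, c t ∈ U) ∧ c 0 = q ∧ HasDerivAt c w 0 := by
  obtain ⟨δ, hδ, hball⟩ := Metric.isOpen_iff.1 hU q hq
  obtain ⟨ε, hε, hεδ⟩ := exists_pos_mul_lt hδ ‖w‖
  refine ⟨fun t => q + (ε * Real.sin (t / ε)) • w, by fun_prop, fun t => hball ?_, by simp, ?_⟩
  · calc dist (q + (ε * Real.sin (t / ε)) • w) q = ‖w‖ * ε * |Real.sin (t / ε)| := by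
          rw [dist_self_add_left, norm_smul, Real.norm_eq_abs, abs_mul, abs_of_pos hε,
            mul_comm, ← mul_assoc]
      _ ≤ ‖w‖ * ε * 1 := by gcongr; exact Real.abs_sin_le_one _
      _ < δ := by rwa [mul_one]
  · have h := ((((hasDerivAt_id (0 : ℝ)).div_const ε).sin.const_mul ε).smul_const w).const_add q
    simpa [hε.ne'] using h

namespace IsLocalRetraction

section NormedSpace

variable {E : Type*} [NormedAddCommGroup E] [NormedSpace ℝ E] {S V : Set E} {r : E → E} {q : E}

theorem mono (hR : IsLocalRetraction S V r) {V' : Set E} (hV' : V' ⊆ V) (ho : IsOpen V') :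
    IsLocalRetraction S V' r :=
  ⟨ho, hR.contDiffOn.mono hV', hR.mapsTo.mono_left hV',
    hR.eqOn_id.mono (inter_subset_inter_right S hV')⟩

theorem mem_nhds (hR : IsLocalRetraction S V r) (hq : q ∈ S ∩ V) : V ∈ 𝓝 q :=
  hR.isOpen.mem_nhds hq.2

theorem apply_eq (hR : IsLocalRetraction S V r) (hq : q ∈ S ∩ V) : r q = q :=
  hR.eqOn_id hq

theorem eventually_mem (hR : IsLocalRetraction S V r) (hq : q ∈ S ∩ V) :
    ∀ᶠ y in 𝓝[S] q, y ∈ S ∩ V :=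
  inter_mem_nhdsWithin S (hR.mem_nhds hq)

theorem contDiffOn_fderiv (hR : IsLocalRetraction S V r) : ContDiffOn ℝ ∞ (fderiv ℝ r) V :=
  hR.contDiffOn.fderiv_of_isOpen hR.isOpen (by simp)

theorem contDiffOn_fderiv_fderiv (hR : IsLocalRetraction S V r) :
    ContDiffOn ℝ ∞ (fderiv ℝ (fderiv ℝ r)) V :=
  hR.contDiffOn_fderiv.fderiv_of_isOpen hR.isOpen (by simp)

theorem hasFDerivAt (hR : IsLocalRetraction S V r) (hq : q ∈ S ∩ V) :
    HasFDerivAt r (fderiv ℝ r q) q :=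
  ((hR.contDiffOn.contDiffAt (hR.mem_nhds hq)).differentiableAt (by simp)).hasFDerivAt

theorem hasFDerivAt_fderiv (hR : IsLocalRetraction S V r) (hq : q ∈ S ∩ V) :
    HasFDerivAt (fderiv ℝ r) (fderiv ℝ (fderiv ℝ r) q) q :=
  ((hR.contDiffOn_fderiv.contDiffAt (hR.mem_nhds hq)).differentiableAt (by simp)).hasFDerivAt

theorem fderiv_fderiv_comm (hR : IsLocalRetraction S V r) (hq : q ∈ S ∩ V) (v w : E) :
    fderiv ℝ (fderiv ℝ r) q v w = fderiv ℝ (fderiv ℝ r) q w v := by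
  refine (hR.contDiffOn.contDiffAt (hR.mem_nhds hq)).isSymmSndFDerivAt ?_ v w
  rw [minSmoothness_of_isRCLikeNormedField]
  exact WithTop.coe_le_coe.2 (le_top : (2 : ℕ∞) ≤ ⊤)

theorem tendsto_nhdsWithin (hR : IsLocalRetraction S V r) (hq : q ∈ S ∩ V) :
    Filter.Tendsto r (𝓝 q) (𝓝[S] q) := by
  refine tendsto_nhdsWithin_iff.2 ⟨?_, Filter.mem_of_superset (hR.mem_nhds hq) hR.mapsTo⟩
  simpa [hR.apply_eq hq] using (hR.hasFDerivAt hq).continuousAt.tendsto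

theorem comp_fderiv_eq_of_eventuallyEq (hR : IsLocalRetraction S V r) (hq : q ∈ S ∩ V)
    {G : Type*} [NormedAddCommGroup G] [NormedSpace ℝ G] {f g : E → G} {f' g' : E →L[ℝ] G}
    (hf : HasFDerivAt f f' q) (hg : HasFDerivAt g g' q) (hfg : f =ᶠ[𝓝[S] q] g) :
    f' ∘L fderiv ℝ r q = g' ∘L fderiv ℝ r q := by
  have hr := hR.hasFDerivAt hq
  rw [← hR.apply_eq hq] at hf hg
  exact (hf.comp q hr).unique
    ((hg.comp q hr).congr_of_eventuallyEq (hR.tendsto_nhdsWithin hq |>.eventually hfg))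

theorem fderiv_fderiv_apply (hR : IsLocalRetraction S V r) (hq : q ∈ S ∩ V) (w : E) :
    fderiv ℝ r q (fderiv ℝ r q w) = fderiv ℝ r q w :=
  DFunLike.congr_fun (hR.comp_fderiv_eq_of_eventuallyEq hq (hR.hasFDerivAt hq) (hasFDerivAt_id q)
    ((hR.eventually_mem hq).mono hR.eqOn_id)) w

theorem exists_curve (hR : IsLocalRetraction S V r) (hq : q ∈ S ∩ V) (w : E) :
    ∃ c : ℝ → E, ContDiff ℝ ∞ c ∧ (∀ t, c t ∈ S ∩ V) ∧ c 0 = q ∧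
      HasDerivAt c (fderiv ℝ r q w) 0 := by
  have hU : IsOpen (V ∩ r ⁻¹' V) := hR.contDiffOn.continuousOn.isOpen_inter_preimage hR.isOpen
    hR.isOpen
  obtain ⟨c, hc, hcU, hc0, hcw⟩ :=
    exists_contDiff_curve_mem hU ⟨hq.2, by simpa [hR.apply_eq hq] using hq.2⟩ w
  refine ⟨r ∘ c, hR.contDiffOn.comp_contDiff hc fun t => (hcU t).1,
    fun t => ⟨hR.mapsTo (hcU t).1, (hcU t).2⟩, by simp [hc0, hR.apply_eq hq], ?_⟩
  have hr : HasFDerivAt r (fderiv ℝ r q) (c 0) := hc0.symm ▸ hR.hasFDerivAt hq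
  exact hr.comp_hasDerivAt 0 hcw

theorem fderiv_apply_deriv (hR : IsLocalRetraction S V r) {c : ℝ → E} {t : ℝ}
    (hc : DifferentiableAt ℝ c t) (hcS : ∀ᶠ s in 𝓝 t, c s ∈ S) (hct : c t ∈ V) :
    fderiv ℝ r (c t) (deriv c t) = deriv c t := by
  have hrc : r ∘ c =ᶠ[𝓝 t] c := by
    filter_upwards [hcS, hc.continuousAt.eventually_mem (hR.isOpen.mem_nhds hct)] with s hsS hsV
    exact hR.apply_eq ⟨hsS, hsV⟩
  have hd := (hR.hasFDerivAt ⟨hcS.self_of_nhds, hct⟩).comp_hasDerivAt t hc.hasDerivAt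
  rw [← hd.deriv, hrc.deriv_eq]

end NormedSpace

section TangentAt

variable {D : ℕ} {S V : Set (EuclideanSpace ℝ (Fin D))}
  {r : EuclideanSpace ℝ (Fin D) → EuclideanSpace ℝ (Fin D)} {q v : EuclideanSpace ℝ (Fin D)}

theorem fderiv_apply_mem_tangentAt (hR : IsLocalRetraction S V r) (hq : q ∈ S ∩ V)
    (w : EuclideanSpace ℝ (Fin D)) : fderiv ℝ r q w ∈ TangentAt S q := by
  obtain ⟨c, hc, hcS, hc0, hcw⟩ := hR.exists_curve hq w
  exact Submodule.subset_span ⟨c, hc, fun t => (hcS t).1, hc0, hcw.deriv⟩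

theorem mem_tangentAt_iff (hR : IsLocalRetraction S V r) (hq : q ∈ S ∩ V) :
    v ∈ TangentAt S q ↔ fderiv ℝ r q v = v := by
  refine ⟨fun hv => ?_, fun hv => hv ▸ hR.fderiv_apply_mem_tangentAt hq v⟩
  have hle : TangentAt S q ≤
      LinearMap.eqLocus (fderiv ℝ r q : EuclideanSpace ℝ (Fin D) →ₗ[ℝ] _) LinearMap.id := by
    refine Submodule.span_le.2 ?_
    rintro _ ⟨c, hc, hcS, rfl, rfl⟩
    exact hR.fderiv_apply_deriv (hc.differentiable (by simp) 0) (.of_forall hcS) hq.2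
  exact hle hv

theorem exists_curve_of_mem_tangentAt (hR : IsLocalRetraction S V r) (hq : q ∈ S ∩ V)
    (hv : v ∈ TangentAt S q) :
    ∃ c : ℝ → EuclideanSpace ℝ (Fin D), ContDiff ℝ ∞ c ∧ (∀ t, c t ∈ S ∩ V) ∧ c 0 = q ∧
      HasDerivAt c v 0 := by
  simpa only [(hR.mem_tangentAt_iff hq).1 hv] using hR.exists_curve hq v

theorem apply_eq_of_eventuallyEq (hR : IsLocalRetraction S V r) (hq : q ∈ S ∩ V)
    {G : Type*} [NormedAddCommGroup G] [NormedSpace ℝ G] {f g : EuclideanSpace ℝ (Fin D) → G}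
    {f' g' : EuclideanSpace ℝ (Fin D) →L[ℝ] G} (hf : HasFDerivAt f f' q)
    (hg : HasFDerivAt g g' q) (hfg : f =ᶠ[𝓝[S] q] g) (hv : v ∈ TangentAt S q) : f' v = g' v := by
  have h := DFunLike.congr_fun (hR.comp_fderiv_eq_of_eventuallyEq hq hf hg hfg) v
  simpa [(hR.mem_tangentAt_iff hq).1 hv] using h

theorem mem_nullityAt_iff (hR : IsLocalRetraction S V r) (hq : q ∈ S ∩ V) {k : SpaceFormKind} :
    v ∈ nullityAt k S q ↔ v ∈ TangentAt S q ∧ ∀ w ∈ TangentAt S q,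
      fderiv ℝ (fderiv ℝ r) q v w ∈ TangentAt S q ⊔ radialAt k q := by
  refine and_congr_right fun hv => ⟨fun hN w hw => ?_, fun hN c W hc hcS hc0 hcv hW hWT => ?_⟩
  · obtain ⟨c, hc, hcS, rfl, hcv⟩ := hR.exists_curve_of_mem_tangentAt hq hv
    have hW : HasDerivAt (fun t => fderiv ℝ r (c t) w) (fderiv ℝ (fderiv ℝ r) (c 0) v w) 0 := by
      simpa using
        ((hR.hasFDerivAt_fderiv hq).comp_hasDerivAt 0 hcv).clm_apply (hasDerivAt_const 0 w)
    have hWsmooth : ContDiff ℝ ∞ fun t => fderiv ℝ r (c t) w :=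
      (hR.contDiffOn_fderiv.comp_contDiff hc fun t => (hcS t).2).clm_apply contDiff_const
    rw [← hW.deriv]
    exact hN c _ hc (fun t => (hcS t).1) rfl hcv.deriv hWsmooth
      fun t => hR.fderiv_apply_mem_tangentAt (hcS t) w
  · subst hc0 hcv
    have hcd := hc.differentiable (by simp) 0
    have hWd := (hW.differentiable (by simp) 0).hasDerivAt
    have hrW : (fun t => fderiv ℝ r (c t) (W t)) =ᶠ[𝓝 0] W := by
      filter_upwards [hcd.continuousAt.eventually_mem (hR.mem_nhds hq)] with t ht
      exact (hR.mem_tangentAt_iff ⟨hcS t, ht⟩).1 (hWT t)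
    have hd : HasDerivAt (fun t => fderiv ℝ r (c t) (W t)) _ 0 :=
      ((hR.hasFDerivAt_fderiv hq).comp_hasDerivAt 0 hcd.hasDerivAt).clm_apply hWd
    rw [← hrW.deriv_eq, hd.deriv]
    exact add_mem (hN _ (hWT 0))
      (Submodule.mem_sup_left (hR.fderiv_apply_mem_tangentAt hq _))

end TangentAt

end IsLocalRetraction

theorem exists_openPartialHomeomorph_comp_of_injective_fderiv {E F : Type*} [NormedAddCommGroup E]
    [NormedSpace ℝ E] [FiniteDimensional ℝ E] [NormedAddCommGroup F] [NormedSpace ℝ F]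
    [FiniteDimensional ℝ F] {n : WithTop ℕ∞} (hn : n ≠ 0) {f : E → F} {U : Set E} (hU : IsOpen U)
    (hf : ContDiffOn ℝ n f U) {x : E} (hx : x ∈ U) (hinj : Function.Injective (fderiv ℝ f x)) :
    ∃ (π : F →L[ℝ] E) (e : OpenPartialHomeomorph E E),
      x ∈ e.source ∧ e.source ⊆ U ∧ ⇑e = π ∘ f ∧ ContDiffOn ℝ n e.symm e.target := by
  have : CompleteSpace E := FiniteDimensional.complete ℝ E
  obtain ⟨π', hπ'⟩ := LinearMap.exists_leftInverse_of_injective (fderiv ℝ f x : E →ₗ[ℝ] F)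
    (LinearMap.ker_eq_bot.2 hinj)
  let π := π'.toContinuousLinearMap
  have hdf := ((hf.contDiffAt (hU.mem_nhds hx)).differentiableAt hn).hasFDerivAt
  have hπf : HasFDerivAt (π ∘ f) ((ContinuousLinearEquiv.refl ℝ E : E ≃L[ℝ] E) : E →L[ℝ] E) x := by
    convert! π.hasFDerivAt.comp x hdf using 1
    ext1 u
    exact (LinearMap.congr_fun hπ' u).symm
  exact ⟨π, exists_openPartialHomeomorph_contDiffOn_symm hn hU (π.contDiff.comp_contDiffOn hf)
    hx hπf⟩

theorem IsSubmanifold.exists_isLocalRetraction {D n : ℕ} {S : Set (EuclideanSpace ℝ (Fin D))}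
    (hS : IsSubmanifold S n) {p : EuclideanSpace ℝ (Fin D)} (hp : p ∈ S) :
    ∃ V r, p ∈ V ∧ IsLocalRetraction S V r := by
  obtain ⟨φ, U, hφ⟩ := hS p hp
  obtain ⟨x, hx, rfl⟩ := hφ.mem
  have hinj : Function.Injective (fderiv ℝ φ x) := by
    simpa [fderivWithin_of_isOpen hφ.isOpen hx] using hφ.immersion x hx
  obtain ⟨π, e, hxe, heU, heπ, hesymm⟩ :=
    exists_openPartialHomeomorph_comp_of_injective_fderiv (by simp) hφ.isOpen hφ.smooth hx hinj
  obtain ⟨V₀, hV₀, himage⟩ := hφ.openImage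
  obtain ⟨ψ, hψ, hψφ⟩ := hφ.embedding
  obtain ⟨V₁, hV₁, hpre⟩ := continuousOn_iff'.1 hψ e.source e.open_source
  have heφ {y} (hye : y ∈ e.source) : π (φ y) ∈ e.target ∧ e.symm (π (φ y)) = y := by
    rw [← Function.comp_apply (f := π), ← heπ]
    exact ⟨e.map_source hye, e.left_inv hye⟩
  have hmem {y} (hy : y ∈ U) : φ y ∈ V₁ ↔ y ∈ e.source := by
    have h := Set.ext_iff.1 hpre (φ y)
    simpa [mem_image_of_mem φ hy, hψφ y hy] using h.symm
  have hsymmU : ∀ q ∈ π ⁻¹' e.target, e.symm (π q) ∈ U := fun q hq => heU (e.map_target hq)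
  refine ⟨V₀ ∩ V₁ ∩ π ⁻¹' e.target, fun q => φ (e.symm (π q)),
    ⟨⟨(himage.subset ⟨x, hx, rfl⟩).2, (hmem hx).2 hxe⟩, (heφ hxe).1⟩,
    (hV₀.inter hV₁).inter (e.open_target.preimage π.continuous), ?_, ?_, ?_⟩
  · exact hφ.smooth.comp (hesymm.comp π.contDiff.contDiffOn fun q hq => hq.2)
      fun q hq => hsymmU q hq.2
  · exact fun q hq => (himage.subset ⟨_, hsymmU q hq.2, rfl⟩).1
  · rintro q ⟨hqS, ⟨hq₀, hq₁⟩, -⟩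
    obtain ⟨y, hy, rfl⟩ := himage.superset ⟨hqS, hq₀⟩
    exact congrArg φ (heφ ((hmem hy).1 hq₁)).2

/-- The sectional curvature of the model space form. -/
def SpaceFormKind.curvature : SpaceFormKind → ℝ
  | .euclidean => 0
  | .sphere => 1
  | .hyperbolic => -1

/-- The operator representing the ambient bilinear form with respect to the Euclidean inner
product. -/
def formOp (k : SpaceFormKind) (D : ℕ) : EuclideanSpace ℝ (Fin D) →L[ℝ] EuclideanSpace ℝ (Fin D) :=
  Matrix.toEuclideanCLM (𝕜 := ℝ) (Matrix.diagonal (formSign k D))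

/-- The projection `u ↦ κ ⟨q, u⟩ q` to the line normal to the space form of curvature `κ` at `q`;
it is zero in the euclidean case. -/
def radialProj (k : SpaceFormKind) {D : ℕ} (q : EuclideanSpace ℝ (Fin D)) :
    EuclideanSpace ℝ (Fin D) →L[ℝ] EuclideanSpace ℝ (Fin D) :=
  k.curvature • (innerSL ℝ (formOp k D q)).smulRight q

section AmbientForm

variable {k : SpaceFormKind} {D : ℕ} {q u v : EuclideanSpace ℝ (Fin D)}

theorem inner_formOp (x y : EuclideanSpace ℝ (Fin D)) :
    inner ℝ (formOp k D x) y = aForm k x y := by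
  simp [formOp, aForm, PiLp.inner_apply, Matrix.mulVec_diagonal, mul_comm]

theorem aForm_comm (x y : EuclideanSpace ℝ (Fin D)) : aForm k x y = aForm k y x := by
  simp only [aForm, mul_right_comm]

theorem aForm_smul_left (a : ℝ) (x y : EuclideanSpace ℝ (Fin D)) :
    aForm k (a • x) y = a * aForm k x y := by
  simp [← inner_formOp, inner_smul_left]

theorem aForm_smul_right (a : ℝ) (x y : EuclideanSpace ℝ (Fin D)) :
    aForm k x (a • y) = a * aForm k x y := by
  simp [← inner_formOp, inner_smul_right]

theorem hasDerivAt_aForm_self {c : ℝ → EuclideanSpace ℝ (Fin D)} {t : ℝ} (hc : HasDerivAt c v t) :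
    HasDerivAt (fun s => aForm k (c s) (c s)) (2 * aForm k (c t) v) t := by
  convert! ((formOp k D).hasFDerivAt.comp_hasDerivAt t hc).inner ℝ hc using 1
  · simp [← inner_formOp]
  · simp [inner_formOp, aForm_comm v, two_mul]

theorem curvature_mul_aForm_self (hq : q ∈ spaceForm k D) :
    k.curvature * aForm k q q = k.curvature ^ 2 := by
  cases k
  · simp [SpaceFormKind.curvature]
  · simp [SpaceFormKind.curvature, show aForm .sphere q q = 1 from hq]
  · simp [SpaceFormKind.curvature, show aForm .hyperbolic q q = -1 from hq.1]

theorem curvature_mul_aForm_of_mem_tangentAt {S : Set (EuclideanSpace ℝ (Fin D))}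
    (hSF : S ⊆ spaceForm k D) (hv : v ∈ TangentAt S q) : k.curvature * aForm k q v = 0 := by
  have hle : TangentAt S q ≤
      (k.curvature • innerSL ℝ (formOp k D q) : EuclideanSpace ℝ (Fin D) →L[ℝ] ℝ).ker := by
    refine Submodule.span_le.2 ?_
    rintro _ ⟨c, hc, hcS, rfl, rfl⟩
    have hd := (hasDerivAt_aForm_self (k := k)
      (hc.differentiable (by simp) 0).hasDerivAt).const_mul k.curvature
    simp only [curvature_mul_aForm_self (hSF (hcS _))] at hd
    have hzero := hd.unique (hasDerivAt_const 0 _)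
    simp only [SetLike.mem_coe, LinearMap.mem_ker, ContinuousLinearMap.coe_coe,
      smul_apply, innerSL_apply_apply, inner_formOp, smul_eq_mul]
    linarith
  simpa [inner_formOp] using hle hv

theorem radialAt_eq_span (k : SpaceFormKind) (q : EuclideanSpace ℝ (Fin D)) :
    radialAt k q = Submodule.span ℝ {k.curvature • q} := by
  cases k
  · simp [radialAt, SpaceFormKind.curvature]
  · simp [radialAt, SpaceFormKind.curvature]
  · simp [radialAt, SpaceFormKind.curvature, ← Set.neg_singleton]

theorem radialAt_le_aPerp_tangentAt {S : Set (EuclideanSpace ℝ (Fin D))}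
    (hSF : S ⊆ spaceForm k D) (q : EuclideanSpace ℝ (Fin D)) :
    radialAt k q ≤ aPerp k (TangentAt S q) := by
  rw [radialAt_eq_span, Submodule.span_singleton_le_iff_mem]
  intro w hw
  rw [aForm_smul_left, curvature_mul_aForm_of_mem_tangentAt hSF hw]

theorem aForm_hyperbolic_succ {m : ℕ} (x y : EuclideanSpace ℝ (Fin (m + 1))) :
    aForm .hyperbolic x y = inner ℝ x y - 2 * (x (Fin.last m) * y (Fin.last m)) := by
  have hinit (i : Fin m) : formSign .hyperbolic (m + 1) i.castSucc = 1 :=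
    if_neg (by simp [i.is_lt.ne])
  have hlast : formSign .hyperbolic (m + 1) (Fin.last m) = -1 := if_pos rfl
  simp only [aForm, PiLp.inner_apply, RCLike.inner_apply, conj_trivial, Fin.sum_univ_castSucc,
    hinit, hlast, one_mul, mul_comm (y _)]
  ring

theorem eq_zero_of_aForm_self_eq_zero (hq : q ∈ spaceForm k D)
    (hqv : k.curvature * aForm k q v = 0) (hv : aForm k v v = 0) : v = 0 := by
  rw [← inner_self_eq_zero (𝕜 := ℝ)]
  cases k
  · simpa only [aForm, formSign, one_mul, PiLp.inner_apply, RCLike.inner_apply, conj_trivial]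
      using hv
  · simpa only [aForm, formSign, one_mul, PiLp.inner_apply, RCLike.inner_apply, conj_trivial]
      using hv
  · rcases D with _ | m
    · simp [Subsingleton.elim v 0]
    have hqq : aForm .hyperbolic q q = -1 := hq.1
    replace hqv : aForm .hyperbolic q v = 0 := by simpa [SpaceFormKind.curvature] using hqv
    rw [aForm_hyperbolic_succ] at hqq hqv hv
    have hCS := real_inner_mul_inner_self_le q v
    rw [sub_eq_zero.1 hqv, sub_eq_zero.1 hv, eq_add_of_sub_eq hqq] at hCS
    have hlast : v (Fin.last m) = 0 := by nlinarith
    simpa [hlast, sub_eq_zero] using hv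

theorem radialProj_apply (u : EuclideanSpace ℝ (Fin D)) :
    radialProj k q u = (k.curvature * aForm k q u) • q := by
  simp [radialProj, inner_formOp, mul_smul]

theorem contDiff_radialProj {n : WithTop ℕ∞} : ContDiff ℝ n (radialProj k (D := D)) :=
  (((innerSL ℝ).contDiff.comp (formOp k D).contDiff).smulRight contDiff_id).const_smul _

theorem radialProj_apply_mem (q u : EuclideanSpace ℝ (Fin D)) :
    radialProj k q u ∈ radialAt k q := by
  rw [radialAt_eq_span, Submodule.mem_span_singleton, radialProj_apply]
  exact ⟨aForm k q u, by rw [smul_smul, mul_comm]⟩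

theorem radialProj_of_mem_radialAt (hq : q ∈ spaceForm k D) (hu : u ∈ radialAt k q) :
    radialProj k q u = u := by
  rw [radialAt_eq_span] at hu
  obtain ⟨a, rfl⟩ := Submodule.mem_span_singleton.1 hu
  have hcube : k.curvature * k.curvature ^ 2 = k.curvature := by
    cases k <;> norm_num [SpaceFormKind.curvature]
  rw [radialProj_apply, aForm_smul_right, aForm_smul_right, curvature_mul_aForm_self hq,
    mul_left_comm, hcube, mul_smul]

theorem radialProj_of_mem_tangentAt {S : Set (EuclideanSpace ℝ (Fin D))}
    (hSF : S ⊆ spaceForm k D) (hv : v ∈ TangentAt S q) : radialProj k q v = 0 := by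
  rw [radialProj_apply, curvature_mul_aForm_of_mem_tangentAt hSF hv, zero_smul]

end AmbientForm

/-- A projection along `TangentAt S q ⊔ radialAt k q`, for `r` a local retraction to `S`: applied to
the derivative of `r`, it turns the second derivative into the second fundamental form. -/
def normalProj (k : SpaceFormKind) {D : ℕ} (r : EuclideanSpace ℝ (Fin D) → EuclideanSpace ℝ (Fin D))
    (q : EuclideanSpace ℝ (Fin D)) : EuclideanSpace ℝ (Fin D) →L[ℝ] EuclideanSpace ℝ (Fin D) :=
  (1 - fderiv ℝ r q) ∘L (1 - radialProj k q)

/-- A linear map whose kernel is the nullity space: the first component expresses that the second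
fundamental form vanishes against all tangent vectors, the second one tangency. -/
def nullityMap (k : SpaceFormKind) {D : ℕ} (r : EuclideanSpace ℝ (Fin D) → EuclideanSpace ℝ (Fin D))
    (q : EuclideanSpace ℝ (Fin D)) : EuclideanSpace ℝ (Fin D) →L[ℝ]
      (EuclideanSpace ℝ (Fin D) →L[ℝ] EuclideanSpace ℝ (Fin D)) × EuclideanSpace ℝ (Fin D) :=
  (ContinuousLinearMap.compL ℝ _ _ _ (normalProj k r q) ∘L
    (ContinuousLinearMap.compL ℝ _ _ _).flip (fderiv ℝ r q) ∘L fderiv ℝ (fderiv ℝ r) q).prod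
    (1 - fderiv ℝ r q)

namespace IsLocalRetraction

variable {k : SpaceFormKind} {D : ℕ} {S V : Set (EuclideanSpace ℝ (Fin D))}
  {r : EuclideanSpace ℝ (Fin D) → EuclideanSpace ℝ (Fin D)} {q v : EuclideanSpace ℝ (Fin D)}

theorem contDiffOn_normalProj (hR : IsLocalRetraction S V r) :
    ContDiffOn ℝ ∞ (normalProj k r) V :=
  (contDiffOn_const.sub hR.contDiffOn_fderiv).clm_comp
    (contDiffOn_const.sub contDiff_radialProj.contDiffOn)

theorem contDiffOn_nullityMap (hR : IsLocalRetraction S V r) :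
    ContDiffOn ℝ ∞ (nullityMap k r) V :=
  contDiffOn_clm_apply.2 fun _ =>
    (hR.contDiffOn_normalProj.clm_comp
      ((hR.contDiffOn_fderiv_fderiv.clm_apply contDiffOn_const).clm_comp
        hR.contDiffOn_fderiv)).prodMk
      (contDiffOn_const.sub (hR.contDiffOn_fderiv.clm_apply contDiffOn_const))

theorem normalProj_eq_zero_iff (hR : IsLocalRetraction S V r) (hSF : S ⊆ spaceForm k D)
    (hq : q ∈ S ∩ V) : normalProj k r q v = 0 ↔ v ∈ TangentAt S q ⊔ radialAt k q := by
  have happly : normalProj k r q v =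
      (v - radialProj k q v) - fderiv ℝ r q (v - radialProj k q v) := rfl
  rw [happly, sub_eq_zero, eq_comm, ← hR.mem_tangentAt_iff hq]
  constructor
  · intro h
    rw [← sub_add_cancel v (radialProj k q v)]
    exact Submodule.add_mem_sup h (radialProj_apply_mem q v)
  · intro h
    obtain ⟨t, ht, s, hs, rfl⟩ := Submodule.mem_sup.1 h
    rwa [map_add, radialProj_of_mem_tangentAt hSF ht, radialProj_of_mem_radialAt (hSF hq.1) hs,
      zero_add, add_sub_cancel_right]

theorem mem_ker_nullityMap_iff (hR : IsLocalRetraction S V r) (hSF : S ⊆ spaceForm k D)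
    (hq : q ∈ S ∩ V) : v ∈ (nullityMap k r q).ker ↔ v ∈ nullityAt k S q := by
  have happly : nullityMap k r q v =
      (normalProj k r q ∘L fderiv ℝ (fderiv ℝ r) q v ∘L fderiv ℝ r q, v - fderiv ℝ r q v) := rfl
  rw [hR.mem_nullityAt_iff hq, LinearMap.mem_ker, ContinuousLinearMap.coe_coe, happly,
    Prod.mk_eq_zero, sub_eq_zero, and_comm, eq_comm (a := v), ← hR.mem_tangentAt_iff hq]
  refine and_congr_right fun _ => ⟨fun h w hw => ?_, fun h => ?_⟩
  · rw [← hR.normalProj_eq_zero_iff hSF hq]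
    simpa [(hR.mem_tangentAt_iff hq).1 hw] using DFunLike.congr_fun h w
  · ext1 w
    exact (hR.normalProj_eq_zero_iff hSF hq).2 (h _ (hR.fderiv_apply_mem_tangentAt hq w))

theorem coe_ker_nullityMap (hR : IsLocalRetraction S V r) (hSF : S ⊆ spaceForm k D)
    (hq : q ∈ S ∩ V) :
    ((nullityMap k r q).ker : Set (EuclideanSpace ℝ (Fin D))) = nullityAt k S q :=
  Set.ext fun _ => hR.mem_ker_nullityMap_iff hSF hq

theorem span_nullityAt (hR : IsLocalRetraction S V r) (hSF : S ⊆ spaceForm k D)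
    (hq : q ∈ S ∩ V) : Submodule.span ℝ (nullityAt k S q) = (nullityMap k r q).ker := by
  rw [← hR.coe_ker_nullityMap hSF hq, Submodule.span_eq]

theorem nullityIndex_eq (hR : IsLocalRetraction S V r) (hSF : S ⊆ spaceForm k D)
    (hq : q ∈ S ∩ V) : nullityIndex k S q = Module.finrank ℝ (nullityMap k r q).ker := by
  rw [nullityIndex, Set.finrank, hR.span_nullityAt hSF hq]

theorem smul_mem_nullityAt (hR : IsLocalRetraction S V r) (hSF : S ⊆ spaceForm k D)
    (hq : q ∈ S ∩ V) (a : ℝ) (hv : v ∈ nullityAt k S q) : a • v ∈ nullityAt k S q := by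
  rw [← hR.coe_ker_nullityMap hSF hq] at hv ⊢
  exact Submodule.smul_mem _ a hv

theorem fderiv_normalProj_apply (hR : IsLocalRetraction S V r) (hSF : S ⊆ spaceForm k D)
    (hq : q ∈ S ∩ V) {Z : EuclideanSpace ℝ (Fin D) → EuclideanSpace ℝ (Fin D)}
    {Z' : EuclideanSpace ℝ (Fin D) →L[ℝ] EuclideanSpace ℝ (Fin D)} (hZ : HasFDerivAt Z Z' q)
    (hZmem : ∀ y ∈ S ∩ V, Z y ∈ TangentAt S y ⊔ radialAt k y) (hv : v ∈ TangentAt S q) :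
    fderiv ℝ (normalProj k r) q v (Z q) = -normalProj k r q (Z' v) := by
  have hQ := ((hR.contDiffOn_normalProj (k := k)).contDiffAt (hR.mem_nhds hq)).differentiableAt
    (by simp)
  have h := hR.apply_eq_of_eventuallyEq hq (hQ.hasFDerivAt.clm_apply hZ) (hasFDerivAt_const 0 q)
    ((hR.eventually_mem hq).mono fun y hy => (hR.normalProj_eq_zero_iff hSF hy).2 (hZmem y hy)) hv
  exact eq_neg_of_add_eq_zero_right (by simpa using h)

theorem fderiv_normalProj_add (hR : IsLocalRetraction S V r) (hSF : S ⊆ spaceForm k D)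
    (hq : q ∈ S ∩ V) {t s : EuclideanSpace ℝ (Fin D)} (hv : v ∈ TangentAt S q)
    (ht : t ∈ TangentAt S q) (hs : s ∈ radialAt k q) :
    fderiv ℝ (normalProj k r) q v (t + s) =
      -normalProj k r q (fderiv ℝ (fderiv ℝ r) q v t) := by
  have ht' : fderiv ℝ (normalProj k r) q v t =
      -normalProj k r q (fderiv ℝ (fderiv ℝ r) q v t) := by
    simpa [(hR.mem_tangentAt_iff hq).1 ht] using hR.fderiv_normalProj_apply hSF hq
      ((hR.hasFDerivAt_fderiv hq).clm_apply (hasFDerivAt_const t q))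
      (fun y hy => Submodule.mem_sup_left (hR.fderiv_apply_mem_tangentAt hy t)) hv
  have hs' : fderiv ℝ (normalProj k r) q v s = 0 := by
    rw [radialAt_eq_span] at hs
    obtain ⟨a, rfl⟩ := Submodule.mem_span_singleton.1 hs
    have hQv : normalProj k r q v = 0 :=
      (hR.normalProj_eq_zero_iff hSF hq).2 (Submodule.mem_sup_left hv)
    have hq' := hR.fderiv_normalProj_apply hSF hq ((hasFDerivAt_id q).const_smul k.curvature)
      (fun y _ => Submodule.mem_sup_right (by
        rw [radialAt_eq_span]; exact Submodule.mem_span_singleton_self _)) hv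
    have hsmul : k.curvature • fderiv ℝ (normalProj k r) q v q = 0 := by simpa [hQv] using hq'
    rw [map_smul, map_smul, hsmul, smul_zero]
  rw [map_add, ht', hs', add_zero]

end IsLocalRetraction

namespace IsLocalRetraction

variable {k : SpaceFormKind} {D : ℕ} {S V : Set (EuclideanSpace ℝ (Fin D))}
  {r Y : EuclideanSpace ℝ (Fin D) → EuclideanSpace ℝ (Fin D)} {q v w : EuclideanSpace ℝ (Fin D)}

theorem fderiv_apply_of_mem_tangentAt (hR : IsLocalRetraction S V r) (hq : q ∈ S ∩ V)
    (hY : DifferentiableAt ℝ Y q) (hYT : ∀ y ∈ S ∩ V, Y y ∈ TangentAt S y)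
    (hv : v ∈ TangentAt S q) :
    fderiv ℝ Y q v = fderiv ℝ (fderiv ℝ r) q v (Y q) + fderiv ℝ r q (fderiv ℝ Y q v) := by
  have h := hR.apply_eq_of_eventuallyEq hq hY.hasFDerivAt
    ((hR.hasFDerivAt_fderiv hq).clm_apply hY.hasFDerivAt)
    ((hR.eventually_mem hq).mono fun y hy => ((hR.mem_tangentAt_iff hy).1 (hYT y hy)).symm) hv
  simpa [add_comm] using h

theorem fderiv_apply_mem_tangentAt_sup_radialAt (hR : IsLocalRetraction S V r) (hq : q ∈ S ∩ V)
    (hY : DifferentiableAt ℝ Y q) (hYN : ∀ y ∈ S ∩ V, Y y ∈ nullityAt k S y)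
    (hv : v ∈ TangentAt S q) : fderiv ℝ Y q v ∈ TangentAt S q ⊔ radialAt k q := by
  rw [hR.fderiv_apply_of_mem_tangentAt hq hY (fun y hy => (hYN y hy).1) hv,
    hR.fderiv_fderiv_comm hq]
  exact add_mem (((hR.mem_nullityAt_iff hq).1 (hYN q hq)).2 v hv)
    (Submodule.mem_sup_left (hR.fderiv_apply_mem_tangentAt hq _))

theorem fderiv_normalProj_fderiv_apply (hR : IsLocalRetraction S V r) (hSF : S ⊆ spaceForm k D)
    (hq : q ∈ S ∩ V) (hY : ContDiffOn ℝ 2 Y V)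
    (hYmem : ∀ y ∈ S ∩ V, ∀ u ∈ TangentAt S y, fderiv ℝ Y y u ∈ TangentAt S y ⊔ radialAt k y)
    (hv : v ∈ TangentAt S q) (hw : w ∈ TangentAt S q) :
    fderiv ℝ (normalProj k r) q v (fderiv ℝ Y q w) = -normalProj k r q
      (fderiv ℝ (fderiv ℝ Y) q v w + fderiv ℝ Y q (fderiv ℝ (fderiv ℝ r) q v w)) := by
  have hYd := ((hY.fderiv_of_isOpen hR.isOpen (by norm_num : (1 : WithTop ℕ∞) + 1 ≤ 2)).contDiffAt
    (hR.mem_nhds hq)).differentiableAt one_ne_zero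
  have h := hR.fderiv_normalProj_apply hSF hq
    (hYd.hasFDerivAt.clm_apply ((hR.hasFDerivAt_fderiv hq).clm_apply (hasFDerivAt_const w q)))
    (fun y hy => hYmem y hy _ (hR.fderiv_apply_mem_tangentAt hy w)) hv
  simpa [(hR.mem_tangentAt_iff hq).1 hw, add_comm] using h

-- The Codazzi equation: both sides are the same second derivative, by symmetry.
theorem fderiv_normalProj_fderiv_comm (hR : IsLocalRetraction S V r) (hSF : S ⊆ spaceForm k D)
    (hq : q ∈ S ∩ V) (hY : ContDiffOn ℝ 2 Y V)
    (hYmem : ∀ y ∈ S ∩ V, ∀ u ∈ TangentAt S y, fderiv ℝ Y y u ∈ TangentAt S y ⊔ radialAt k y)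
    (hv : v ∈ TangentAt S q) (hw : w ∈ TangentAt S q) :
    fderiv ℝ (normalProj k r) q v (fderiv ℝ Y q w) =
      fderiv ℝ (normalProj k r) q w (fderiv ℝ Y q v) := by
  have hYsymm := (hY.contDiffAt (hR.mem_nhds hq)).isSymmSndFDerivAt (by simp)
  rw [hR.fderiv_normalProj_fderiv_apply hSF hq hY hYmem hv hw,
    hR.fderiv_normalProj_fderiv_apply hSF hq hY hYmem hw hv, hYsymm v w,
    hR.fderiv_fderiv_comm hq v w]

theorem fderiv_apply_mem_nullityAt_sup_aPerp (hR : IsLocalRetraction S V r)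
    (hSF : S ⊆ spaceForm k D) (hq : q ∈ S ∩ V) (hY : ContDiffOn ℝ 2 Y V)
    (hYN : ∀ y ∈ S ∩ V, Y y ∈ nullityAt k S y) (hv : v ∈ nullityAt k S q) :
    fderiv ℝ Y q v ∈ Submodule.span ℝ (nullityAt k S q) ⊔ aPerp k (TangentAt S q) := by
  have hYmem : ∀ y ∈ S ∩ V, ∀ u ∈ TangentAt S y,
      fderiv ℝ Y y u ∈ TangentAt S y ⊔ radialAt k y := fun y hy u hu =>
    hR.fderiv_apply_mem_tangentAt_sup_radialAt hy
      ((hY.contDiffAt (hR.mem_nhds hy)).differentiableAt two_ne_zero) hYN hu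
  have hvα := ((hR.mem_nullityAt_iff hq).1 hv).2
  obtain ⟨z, hz, s, hs, hzs⟩ := Submodule.mem_sup.1 (hYmem q hq v hv.1)
  rw [← hzs]
  refine Submodule.add_mem_sup (Submodule.subset_span ?_) (radialAt_le_aPerp_tangentAt hSF q hs)
  refine (hR.mem_nullityAt_iff hq).2 ⟨hz, fun w hw => ?_⟩
  obtain ⟨t, ht, u, hu, htu⟩ := Submodule.mem_sup.1 (hYmem q hq w hw)
  have hcodazzi := hR.fderiv_normalProj_fderiv_comm hSF hq hY hYmem hv.1 hw
  rw [← hzs, ← htu, hR.fderiv_normalProj_add hSF hq hv.1 ht hu,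
    hR.fderiv_normalProj_add hSF hq hw hz hs, (hR.normalProj_eq_zero_iff hSF hq).2 (hvα t ht),
    eq_comm, neg_inj, hR.fderiv_fderiv_comm hq] at hcodazzi
  exact (hR.normalProj_eq_zero_iff hSF hq).1 hcodazzi

end IsLocalRetraction

theorem mem_lcNullitySet_iff {k : SpaceFormKind} {D : ℕ} {S : Set (EuclideanSpace ℝ (Fin D))}
    {p : EuclideanSpace ℝ (Fin D)} :
    p ∈ lcNullitySet k S ↔
      p ∈ S ∧ ∀ᶠ q in 𝓝[S] p, nullityIndex k S q = nullityIndex k S p :=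
  and_congr_right fun _ => mem_nhdsWithin_iff_exists_mem_nhds_inter.symm

theorem eventually_mem_lcNullitySet {k : SpaceFormKind} {D : ℕ}
    {S : Set (EuclideanSpace ℝ (Fin D))} {p : EuclideanSpace ℝ (Fin D)}
    (hp : p ∈ lcNullitySet k S) : ∀ᶠ q in 𝓝[S] p, q ∈ lcNullitySet k S := by
  have hconst := (mem_lcNullitySet_iff.1 hp).2
  filter_upwards [self_mem_nhdsWithin, hconst, eventually_eventually_nhdsWithin.2 hconst]
    with q hqS hqp hq
  exact mem_lcNullitySet_iff.2 ⟨hqS, hq.mono fun y hy => hy.trans hqp.symm⟩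

/-- A smooth family `P` of linear maps on `V` projecting to the nullity spaces at the points of
`S ∩ V`. -/
structure IsNullityProjection (k : SpaceFormKind) {D : ℕ} (S V : Set (EuclideanSpace ℝ (Fin D)))
    (P : EuclideanSpace ℝ (Fin D) → EuclideanSpace ℝ (Fin D) →L[ℝ] EuclideanSpace ℝ (Fin D)) :
    Prop where
  contDiffOn : ContDiffOn ℝ ∞ P V
  apply_mem : ∀ q ∈ S ∩ V, ∀ u, P q u ∈ nullityAt k S q
  apply_eq : ∀ q ∈ S ∩ V, ∀ u ∈ nullityAt k S q, P q u = u

/-- The projection along the nullity space, precomposed with the orthogonal projection to the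
tangent space, for a local retraction `r` to a submanifold and a nullity projection `P`. It is
defined without reference to tangent spaces so as to be smooth in the base point. -/
def conullityProj (k : SpaceFormKind) {D : ℕ}
    (r : EuclideanSpace ℝ (Fin D) → EuclideanSpace ℝ (Fin D))
    (P : EuclideanSpace ℝ (Fin D) → EuclideanSpace ℝ (Fin D) →L[ℝ] EuclideanSpace ℝ (Fin D))
    (q : EuclideanSpace ℝ (Fin D)) : EuclideanSpace ℝ (Fin D) →L[ℝ] EuclideanSpace ℝ (Fin D) :=
  (1 - P q) ∘L formProj (formOp k D) (fderiv ℝ r q)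

namespace IsLocalRetraction

variable {k : SpaceFormKind} {D : ℕ} {S V : Set (EuclideanSpace ℝ (Fin D))}
  {r : EuclideanSpace ℝ (Fin D) → EuclideanSpace ℝ (Fin D)} {q u : EuclideanSpace ℝ (Fin D)}
  {P : EuclideanSpace ℝ (Fin D) → EuclideanSpace ℝ (Fin D) →L[ℝ] EuclideanSpace ℝ (Fin D)}

theorem isUnit_gramOp_fderiv (hR : IsLocalRetraction S V r) (hSF : S ⊆ spaceForm k D)
    (hq : q ∈ S ∩ V) : IsUnit (gramOp (formOp k D) (fderiv ℝ r q)) :=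
  isUnit_gramOp (hR.fderiv_fderiv_apply hq) fun w hw =>
    eq_zero_of_aForm_self_eq_zero (hSF hq.1)
      (curvature_mul_aForm_of_mem_tangentAt hSF (hR.fderiv_apply_mem_tangentAt hq w))
      (by rwa [inner_formOp] at hw)

theorem contDiffAt_conullityProj (hR : IsLocalRetraction S V r) (hSF : S ⊆ spaceForm k D)
    (hP : IsNullityProjection k S V P) (hq : q ∈ S ∩ V) :
    ContDiffAt ℝ ∞ (conullityProj k r P) q :=
  (contDiffAt_const.sub (hP.contDiffOn.contDiffAt (hR.mem_nhds hq))).clm_comp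
    (contDiffAt_formProj (hR.contDiffOn_fderiv.contDiffAt (hR.mem_nhds hq))
      (hR.isUnit_gramOp_fderiv hSF hq))

theorem conullityProj_of_mem_tangentAt (hR : IsLocalRetraction S V r) (hSF : S ⊆ spaceForm k D)
    (hq : q ∈ S ∩ V) (hu : u ∈ TangentAt S q) : conullityProj k r P q u = u - P q u := by
  simp [conullityProj, formProj_apply_of_apply_eq (hR.isUnit_gramOp_fderiv hSF hq)
    ((hR.mem_tangentAt_iff hq).1 hu)]

theorem conullityProj_of_mem_nullityAt (hR : IsLocalRetraction S V r) (hSF : S ⊆ spaceForm k D)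
    (hP : IsNullityProjection k S V P) (hq : q ∈ S ∩ V) (hu : u ∈ nullityAt k S q) :
    conullityProj k r P q u = 0 := by
  rw [hR.conullityProj_of_mem_tangentAt hSF hq hu.1, hP.apply_eq q hq u hu, sub_self]

theorem conullityProj_of_mem_aPerp (hR : IsLocalRetraction S V r) (hq : q ∈ S ∩ V)
    (hu : u ∈ aPerp k (TangentAt S q)) : conullityProj k r P q u = 0 := by
  have hzero : formProj (formOp k D) (fderiv ℝ r q) u = 0 := formProj_apply_eq_zero fun w => by
    rw [inner_formOp]
    exact hu _ (hR.fderiv_apply_mem_tangentAt hq w)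
  simp [conullityProj, hzero]

-- The derivative of the vector field `y ↦ P y u` along itself has no component for
-- `conullityProj`, since the nullity distribution is autoparallel.
theorem fderiv_conullityProj_apply_self (hR : IsLocalRetraction S V r) (hSF : S ⊆ spaceForm k D)
    (hP : IsNullityProjection k S V P) (hq : q ∈ S ∩ V) (hu : u ∈ nullityAt k S q) :
    fderiv ℝ (conullityProj k r P) q u u = 0 := by
  have hPu : ContDiffOn ℝ ∞ (fun y => P y u) V := hP.contDiffOn.clm_apply contDiffOn_const
  have hPud : HasFDerivAt (fun y => P y u) (fderiv ℝ (fun y => P y u) q) q :=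
    ((hPu.contDiffAt (hR.mem_nhds hq)).differentiableAt (by simp)).hasFDerivAt
  have hM := ((hR.contDiffAt_conullityProj hSF hP hq).differentiableAt (by simp)).hasFDerivAt
  have hzero : conullityProj k r P q (fderiv ℝ (fun y => P y u) q u) = 0 := by
    have hauto := hR.fderiv_apply_mem_nullityAt_sup_aPerp hSF hq
      (contDiffOn_infty.1 hPu 2)
      (fun y hy => hP.apply_mem y hy u) hu
    rw [hR.span_nullityAt hSF hq] at hauto
    obtain ⟨z, hz, s, hs, hzs⟩ := Submodule.mem_sup.1 hauto
    rw [← hzs, map_add, hR.conullityProj_of_mem_aPerp hq hs, add_zero]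
    exact hR.conullityProj_of_mem_nullityAt hSF hP hq ((hR.mem_ker_nullityMap_iff hSF hq).1 hz)
  have h := hR.apply_eq_of_eventuallyEq hq (hM.clm_apply hPud) (hasFDerivAt_const 0 q)
    ((hR.eventually_mem hq).mono fun y hy =>
      hR.conullityProj_of_mem_nullityAt hSF hP hy (hP.apply_mem y hy u)) hu.1
  simpa [hzero, hP.apply_eq q hq u hu] using h

theorem eventually_deriv_mem_nullityAt (hR : IsLocalRetraction S V r) (hSF : S ⊆ spaceForm k D)
    (hP : IsNullityProjection k S V P) {γ : ℝ → EuclideanSpace ℝ (Fin D)}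
    (hγ : IsGeodesicOn k S γ) {t₀ : ℝ} (ht₀ : γ t₀ ∈ V)
    (hv : deriv γ t₀ ∈ nullityAt k S (γ t₀)) :
    ∀ᶠ t in 𝓝 t₀, deriv γ t ∈ nullityAt k S (γ t) := by
  have hγ2 : ContDiff ℝ 2 γ := contDiff_infty.1 hγ.smooth 2
  have hmem : ∀ᶠ t in 𝓝 t₀, γ t ∈ S ∩ V :=
    (hγ.smooth.continuous.continuousAt.eventually_mem (hR.isOpen.mem_nhds ht₀)).mono
      fun t ht => ⟨hγ.mem t, ht⟩
  have happly {t : ℝ} (ht : γ t ∈ S ∩ V) :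
      conullityProj k r P (γ t) (deriv γ t) = deriv γ t - P (γ t) (deriv γ t) :=
    hR.conullityProj_of_mem_tangentAt hSF ht <| (hR.mem_tangentAt_iff ht).2 <|
      hR.fderiv_apply_deriv (hγ2.differentiable two_ne_zero t) (.of_forall hγ.mem) ht.2
  have hzero := eventually_clm_apply_deriv_eq_zero
    ((hR.contDiffAt_conullityProj hSF hP ⟨hγ.mem t₀, ht₀⟩).of_le
      (mod_cast le_top)) hγ2
    (hmem.mono fun t ht => hR.conullityProj_of_mem_aPerp ht (hγ.accel_normal t))
    (hmem.mono fun t ht => hR.fderiv_conullityProj_apply_self hSF hP ht (by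
      rw [happly ht, sub_sub_cancel]
      exact hP.apply_mem _ ht _))
    (hR.conullityProj_of_mem_nullityAt hSF hP ⟨hγ.mem t₀, ht₀⟩ hv)
  filter_upwards [hmem, hzero] with t ht hzt
  rw [sub_eq_zero.1 ((happly ht).symm.trans hzt)]
  exact hP.apply_mem _ ht _

end IsLocalRetraction

theorem exists_isLocalRetraction_isNullityProjection {k : SpaceFormKind} {D n : ℕ}
    {S : Set (EuclideanSpace ℝ (Fin D))} (hSF : S ⊆ spaceForm k D) (hS : IsSubmanifold S n)
    {p : EuclideanSpace ℝ (Fin D)} (hp : p ∈ lcNullitySet k S) :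
    ∃ V r P, p ∈ V ∧ S ∩ V ⊆ lcNullitySet k S ∧ IsLocalRetraction S V r ∧
      IsNullityProjection k S V P ∧
      ∀ q ∈ S ∩ V, SurjOn (P q) (nullityAt k S p) (nullityAt k S q) := by
  obtain ⟨V₀, r, hpV₀, hR⟩ := hS.exists_isLocalRetraction hp.1
  obtain ⟨V₁, hV₁V₀, hV₁, hpV₁, P, hP, hproj⟩ :=
    exists_contDiffOn_isProj_ker hR.isOpen (hR.contDiffOn_nullityMap (k := k)) hpV₀
  obtain ⟨W, hW, hpW, hWS⟩ := mem_nhdsWithin.1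
    ((mem_lcNullitySet_iff.1 hp).2.and (eventually_mem_lcNullitySet hp))
  have hindex {q} (hq : q ∈ S ∩ (V₁ ∩ W)) : Module.finrank ℝ (nullityMap k r q).ker =
      Module.finrank ℝ (nullityMap k r p).ker := by
    rw [← hR.nullityIndex_eq hSF ⟨hq.1, hV₁V₀ hq.2.1⟩, ← hR.nullityIndex_eq hSF ⟨hp.1, hpV₀⟩]
    exact (hWS ⟨hq.2.2, hq.1⟩).1
  have hR' : IsLocalRetraction S (V₁ ∩ W) r :=
    hR.mono (inter_subset_left.trans hV₁V₀) (hV₁.inter hW)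
  refine ⟨V₁ ∩ W, r, P, ⟨hpV₁, hpW⟩, fun q hq => (hWS ⟨hq.2.2, hq.1⟩).2, hR',
    ⟨hP.mono inter_subset_left, fun q hq u => ?_, fun q hq u hu => ?_⟩, fun q hq u hu => ?_⟩
  · exact (hR'.mem_ker_nullityMap_iff hSF hq).1 ((hproj q hq.2.1 (hindex hq)).1.map_mem u)
  · exact (hproj q hq.2.1 (hindex hq)).1.map_id u ((hR'.mem_ker_nullityMap_iff hSF hq).2 hu)
  · rw [← hR'.mem_ker_nullityMap_iff hSF hq, ← (hproj q hq.2.1 (hindex hq)).2] at hu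
    obtain ⟨w, hw, rfl⟩ := hu
    exact ⟨w, (hR.mem_ker_nullityMap_iff hSF ⟨hp.1, hpV₀⟩).1 hw, rfl⟩

theorem exists_contDiff_frame_nullityAt {k : SpaceFormKind} {D n : ℕ}
    {S : Set (EuclideanSpace ℝ (Fin D))} (hSF : S ⊆ spaceForm k D) (hS : IsSubmanifold S n)
    {p : EuclideanSpace ℝ (Fin D)} (hp : p ∈ lcNullitySet k S) :
    ∃ W ∈ 𝓝 p, ∃ X : Fin (nullityIndex k S p) →
        (EuclideanSpace ℝ (Fin D) → EuclideanSpace ℝ (Fin D)),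
      (∀ i, ContDiff ℝ ∞ (X i)) ∧ ∀ q ∈ W ∩ S, (∀ i, X i q ∈ nullityAt k S q) ∧
        Submodule.span ℝ (nullityAt k S q) = Submodule.span ℝ (range fun i => X i q) := by
  obtain ⟨V, r, P, hpV, -, hR, hP, hsurj⟩ := exists_isLocalRetraction_isNullityProjection hSF hS hp
  obtain ⟨P', hP', hPP'⟩ := exists_contDiff_eventuallyEq hP.contDiffOn (hR.isOpen.mem_nhds hpV)
  let b : Module.Basis (Fin (nullityIndex k S p)) ℝ (Submodule.span ℝ (nullityAt k S p)) :=
    Module.finBasisOfFinrankEq ℝ _ rfl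
  have hspan : Submodule.span ℝ (range fun i => (b i : EuclideanSpace ℝ (Fin D))) =
      Submodule.span ℝ (nullityAt k S p) := by
    have hmap := congrArg (Submodule.map (Submodule.subtype _)) b.span_eq
    rwa [Submodule.map_span, Submodule.map_subtype_top, ← range_comp] at hmap
  refine ⟨V ∩ {q | P' q = P q}, Filter.inter_mem (hR.isOpen.mem_nhds hpV) hPP',
    fun i q => P' q (b i), fun i => hP'.clm_apply contDiff_const, ?_⟩
  rintro q ⟨⟨hqV, hPq : P' q = P q⟩, hqS⟩
  simp only [hPq]
  have hmem := hP.apply_mem q ⟨hqS, hqV⟩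
  refine ⟨fun i => hmem (b i), le_antisymm ?_ ?_⟩
  · have hrange : (range fun i => P q (b i)) = P q '' range fun i => (b i).1 := (range_comp _ _)
    rw [hrange, ← ContinuousLinearMap.coe_coe, ← Submodule.map_span, hspan, Submodule.map_span]
    exact Submodule.span_mono (hsurj q ⟨hqS, hqV⟩)
  · exact Submodule.span_mono (range_subset_iff.2 fun i => hmem (b i))

theorem IsGeodesicOn.eventually_mem_lcNullitySet {k : SpaceFormKind} {D n : ℕ}
    {S : Set (EuclideanSpace ℝ (Fin D))} (hSF : S ⊆ spaceForm k D) (hS : IsSubmanifold S n)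
    {γ : ℝ → EuclideanSpace ℝ (Fin D)} (hγ : IsGeodesicOn k S γ) {t₀ : ℝ}
    (ht₀ : γ t₀ ∈ lcNullitySet k S) (hv : deriv γ t₀ ∈ nullityAt k S (γ t₀)) :
    ∀ᶠ t in 𝓝 t₀, γ t ∈ lcNullitySet k S ∧ deriv γ t ∈ nullityAt k S (γ t) := by
  obtain ⟨V, r, P, hpV, hV, hR, hP, -⟩ := exists_isLocalRetraction_isNullityProjection hSF hS ht₀
  filter_upwards [hγ.smooth.continuous.continuousAt.eventually_mem (hR.isOpen.mem_nhds hpV),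
    hR.eventually_deriv_mem_nullityAt hSF hP hγ hpV hv] with t htV htN
  exact ⟨hV ⟨hγ.mem t, htV⟩, htN⟩

theorem IsSubmanifold.smul_mem_nullityAt {k : SpaceFormKind} {D n : ℕ}
    {S : Set (EuclideanSpace ℝ (Fin D))} (hSF : S ⊆ spaceForm k D) (hS : IsSubmanifold S n)
    {q v : EuclideanSpace ℝ (Fin D)} (hq : q ∈ S) (hv : v ∈ nullityAt k S q) (a : ℝ) :
    a • v ∈ nullityAt k S q := by
  obtain ⟨V, r, hqV, hR⟩ := hS.exists_isLocalRetraction hq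
  exact hR.smul_mem_nullityAt hSF ⟨hq, hqV⟩ a hv

theorem mem_leafThrough_of_curve {k : SpaceFormKind} {D n : ℕ}
    {S A : Set (EuclideanSpace ℝ (Fin D))} (hSF : S ⊆ spaceForm k D) (hS : IsSubmanifold S n)
    (hA : A ⊆ S) {γ : ℝ → EuclideanSpace ℝ (Fin D)} (hγ : ContDiff ℝ ∞ γ)
    {p : EuclideanSpace ℝ (Fin D)} (h0 : γ 0 ∈ leafThrough k S A p) {t : ℝ}
    (hmem : ∀ s, |s| ≤ |t| → γ s ∈ A ∧ deriv γ s ∈ nullityAt k S (γ s)) :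
    γ t ∈ leafThrough k S A p := by
  obtain ⟨c, hc, hcA, hcN, hc0, hc1⟩ := h0
  let T : Set (EuclideanSpace ℝ (Fin D) × EuclideanSpace ℝ (Fin D)) :=
    {z | z.1 ∈ A ∧ z.2 ∈ nullityAt k S z.1}
  have hT : ∀ z ∈ T, ∀ a : ℝ, (z.1, a • z.2) ∈ T := fun z hz a =>
    ⟨hz.1, hS.smul_mem_nullityAt hSF (hA hz.1) hz.2 a⟩
  have hγT : ∀ s ∈ Icc (0 : ℝ) 1, (γ (t * s), deriv (fun s => γ (t * s)) s) ∈ T := fun s hs => by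
    rw [deriv_comp_mul_left]
    refine hT (γ (t * s), _) (hmem _ ?_) t
    rw [abs_mul, abs_of_nonneg hs.1]
    exact mul_le_of_le_one_right (abs_nonneg t) hs.2
  obtain ⟨C, hC, hC0, hC1, hCT⟩ := exists_contDiff_concat (by simp) hT hc
    (hγ.comp (contDiff_const.mul contDiff_id)) (by simpa using hc1) (fun s => ⟨hcA s, hcN s⟩) hγT
  exact ⟨C, hC, fun s => (hCT s).1, fun s => (hCT s).2, hC0.trans hc0, by simpa using hC1⟩

/-- **The nullity distribution is smooth and autoparallel where the index of nullity is locally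
constant.**  Let `M = S` be an `n`-dimensional submanifold of a space form with nullity
distribution `𝒩`.  On the open subset of `M` where the index of nullity is locally constant:
(i) `𝒩` is a smooth distribution (locally spanned by smooth vector fields);
(ii) `𝒩` is autoparallel: if `X` and `Y` are vector fields tangent to `𝒩`, then the Levi-Civita
covariant derivative `∇_X Y` is again tangent to `𝒩` (for ambient extensions `X`, `Y`, by the
Gauss formula this says that the derivative of `Y` along `X p` lies in `𝒩_p ⊕ (T_pM)^⊥`);
(iii) consequently the maximal integral manifolds of `𝒩` there are totally geodesic submanifolds
of `M`: any geodesic of `M` starting tangent to a leaf stays in the leaf for small times. -/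
theorem nullity_smooth_autoparallel_totally_geodesic (k : SpaceFormKind) (n codim : ℕ)
    (S : Set (EuclideanSpace ℝ (Fin (ambientDim k n codim))))
    (hSF : S ⊆ spaceForm k (ambientDim k n codim))
    (hsub : IsSubmanifold S n) :
    (∀ p ∈ lcNullitySet k S, ∃ W ∈ nhds p,
      ∃ X : Fin (nullityIndex k S p) →
          (EuclideanSpace ℝ (Fin (ambientDim k n codim)) →
            EuclideanSpace ℝ (Fin (ambientDim k n codim))),
        (∀ i, ContDiff ℝ (⊤ : ℕ∞) (X i)) ∧ ∀ q ∈ W ∩ S, (∀ i, X i q ∈ nullityAt k S q) ∧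
          Submodule.span ℝ (nullityAt k S q) = Submodule.span ℝ (Set.range fun i => X i q)) ∧
    (∀ X Y : EuclideanSpace ℝ (Fin (ambientDim k n codim)) →
        EuclideanSpace ℝ (Fin (ambientDim k n codim)),
      ContDiff ℝ (⊤ : ℕ∞) X → ContDiff ℝ (⊤ : ℕ∞) Y →
      (∀ q ∈ lcNullitySet k S, X q ∈ nullityAt k S q ∧ Y q ∈ nullityAt k S q) →
      ∀ p ∈ lcNullitySet k S,
        fderiv ℝ Y p (X p) ∈ Submodule.span ℝ (nullityAt k S p) ⊔ aPerp k (TangentAt S p)) ∧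
    (∀ p ∈ lcNullitySet k S, ∀ q ∈ leafThrough k S (lcNullitySet k S) p,
      ∀ v ∈ nullityAt k S q, ∀ γ : ℝ → EuclideanSpace ℝ (Fin (ambientDim k n codim)),
        IsGeodesicOn k S γ → γ 0 = q → deriv γ 0 = v →
        ∃ ε > 0, ∀ t : ℝ, |t| < ε → γ t ∈ leafThrough k S (lcNullitySet k S) p) := by
  refine ⟨fun p hp => exists_contDiff_frame_nullityAt hSF hsub hp, ?_, ?_⟩
  · intro X Y _ hY hXY p hp
    obtain ⟨V, r, P, hpV, hV, hR, -⟩ := exists_isLocalRetraction_isNullityProjection hSF hsub hp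
    exact hR.fderiv_apply_mem_nullityAt_sup_aPerp hSF ⟨hp.1, hpV⟩
      (contDiff_infty.1 hY 2).contDiffOn
      (fun y hy => (hXY y (hV hy)).2) (hXY p hp).1
  · rintro p - q hq v hv γ hγ rfl rfl
    have hlc : γ 0 ∈ lcNullitySet k S := by
      obtain ⟨c, -, hc, -, -, hc1⟩ := hq
      exact hc1 ▸ hc 1
    obtain ⟨ε, hε, hball⟩ :=
      Metric.eventually_nhds_iff.1 (hγ.eventually_mem_lcNullitySet hSF hsub hlc hv)
    refine ⟨ε, hε, fun t ht => ?_⟩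
    exact mem_leafThrough_of_curve hSF hsub (fun _ h => h.1) hγ.smooth hq fun s hs =>
      hball (by simpa using hs.trans_lt ht)
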